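/- arXiv:2504.10865 — 2 statements merged into one kernel-verified Lean document; each statement's English description precedes it below -/
import Mathlib

section
/- Let h : ℝ^p → ℝ^p be continuous with h(x) = A_x x + b_x, where A_x ∈ ℝ^{p×p} and b_x ∈ ℝ^p depend on x. Suppose sup_x max_i (A_x[i,i] + Σ_{j≠i} |A_x[i,j]|) < 0, sup_x ‖A_x‖_∞ < ∞, and sup_x ‖b_x‖_∞ < ∞. Then there exists x* ∈ ℝ^p with h(x*) = 0. -/
open Matrix Finset
attribute [local instance] Matrix.linftyOpNormedAddCommGroup

/-!
On the cube `[-r, r]^ι` with `r = B / |c|`, diagonal dominance makes every component `h_i`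
nonpositive on the face `x_i = r` and nonnegative on the face `x_i = -r`, so `h` vanishes somewhere
in the cube by the Poincaré–Miranda theorem, an equivalent form of Brouwer's fixed point theorem.

The Poincaré–Miranda theorem in turn follows by compactness from a combinatorial statement: if each
`s_i` labels a grid by `0` and `1`, with `0` on the lower and `1` on the upper face in direction
`i`, then in some unit cube every `s_i` takes both values. The cup product of the coboundaries
`δs_i` modulo two vanishes on each cube on which some `s_i` is constant, while Stokes' theorem,
applied one direction at a time, shows that its sum over the grid is `1`.
-/

theorem sum_sum_erase_eq_zero_of_symm {ι R : Type*} [DecidableEq ι] [Semiring R] [CharP R 2]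
    (S : Finset ι) {F : ι → ι → R} (hF : ∀ i k, F i k = F k i) :
    ∑ i ∈ S, ∑ k ∈ S.erase i, F i k = 0 := by
  rw [Finset.sum_sigma']
  refine Finset.sum_involution (fun q _ => ⟨q.2, q.1⟩) ?_ ?_ ?_ fun _ _ => rfl
  · rintro ⟨i, k⟩ -
    rw [hF k i, CharTwo.add_self_eq_zero]
  · rintro ⟨i, k⟩ hik - heq
    exact Finset.ne_of_mem_erase (Finset.mem_sigma.1 hik).2 (congrArg Sigma.fst heq)
  · rintro ⟨i, k⟩ hik
    simp only [Finset.mem_sigma, Finset.mem_erase] at hik ⊢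
    exact ⟨hik.2.2, hik.2.1.symm, hik.1⟩

namespace CubicalSperner

section Cochains

variable {ι R : Type*} [DecidableEq ι]

/-- The vertices of the cube with least vertex `x` and edges in the directions `S`. -/
def cube (S : Finset ι) (x : ι → ℕ) : Set (ι → ℕ) :=
  Set.Icc x (S.piecewise (x + 1) x)

/-- The coboundary modulo two of a cubical cochain, encoded as a function `w` whose value on the
cube with least vertex `x` and directions `S` is `w S x`. There are no signs, as coefficients are
meant to have characteristic two. -/
def coboundary [AddCommMonoid R] (w : Finset ι → (ι → ℕ) → R) (S : Finset ι) (x : ι → ℕ) : R :=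
  ∑ i ∈ S, (w (S.erase i) (x + Pi.single i 1) + w (S.erase i) x)

/-- The cup product `δs_{i₁} ⌣ ⋯ ⌣ δs_{iₘ}` of coboundaries of vertex labellings, for the list
`[i₁, …, iₘ]`. As `δs ⌣ w = δ(s ⌣ w)` for closed `w`, it is defined as an iterated coboundary, where
`s ⌣ w` evaluates `s` at the least vertex of a cube. -/
def cup [Semiring R] (s : ι → (ι → ℕ) → R) : List ι → Finset ι → (ι → ℕ) → R
  | [] => 1
  | i :: l => coboundary fun S x => s i x * cup s l S x

/-- The least vertices of the unit cubes with directions `S` in the face of the grid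
`∏ i, {0, …, N i}` on which the coordinates outside `S` are maximal. -/
def grid [Fintype ι] (N : ι → ℕ) (S : Finset ι) : Finset (ι → ℕ) :=
  Fintype.piFinset fun i => if i ∈ S then Finset.range (N i) else {N i}

theorem cup_cons_apply [Semiring R] (s : ι → (ι → ℕ) → R) (i : ι) (l : List ι) (S : Finset ι)
    (x : ι → ℕ) :
    cup s (i :: l) S x =
      ∑ k ∈ S, (s i (x + Pi.single k 1) * cup s l (S.erase k) (x + Pi.single k 1) +
        s i x * cup s l (S.erase k) x) :=
  rfl

theorem self_mem_cube (S : Finset ι) (x : ι → ℕ) : x ∈ cube S x :=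
  ⟨le_rfl, fun j => by by_cases hj : j ∈ S <;> simp [hj]⟩

theorem apply_eq_of_mem_cube {S : Finset ι} {x y : ι → ℕ} {i : ι} (hy : y ∈ cube S x)
    (hi : i ∉ S) : y i = x i :=
  le_antisymm ((hy.2 i).trans_eq (Finset.piecewise_eq_of_notMem _ _ _ hi)) (hy.1 i)

theorem cube_mono {S T : Finset ι} (hST : S ⊆ T) (x : ι → ℕ) : cube S x ⊆ cube T x := by
  refine Set.Icc_subset_Icc_right fun j => ?_
  by_cases hS : j ∈ S
  · simp [hS, hST hS]
  · by_cases hT : j ∈ T <;> simp [hS, hT]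

theorem cube_erase_add_single_subset {S : Finset ι} {i : ι} (hi : i ∈ S) (x : ι → ℕ) :
    cube (S.erase i) (x + Pi.single i 1) ⊆ cube S x := by
  refine Set.Icc_subset_Icc le_self_add fun j => ?_
  obtain rfl | hj := eq_or_ne j i
  · simp [hi]
  · by_cases hS : j ∈ S <;> simp [hS, hj]

section CharTwo

variable [Semiring R] [CharP R 2]

theorem coboundary_coboundary (w : Finset ι → (ι → ℕ) → R) :
    coboundary (coboundary w) = 0 := by
  ext S x
  simp only [coboundary, ← Finset.sum_add_distrib]
  refine sum_sum_erase_eq_zero_of_symm S fun i k => ?_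
  rw [Finset.erase_right_comm, add_right_comm x, add_add_add_comm]

theorem coboundary_cup (s : ι → (ι → ℕ) → R) (l : List ι) :
    coboundary (cup s l) = 0 := by
  cases l with
  | nil => ext S x; simp [cup, coboundary, CharTwo.add_self_eq_zero]
  | cons i l => exact coboundary_coboundary _

theorem cup_eq_zero_of_const {s : ι → (ι → ℕ) → R} {l : List ι}
    {S : Finset ι} {x : ι → ℕ} {i : ι} (hi : i ∈ l) {v : R} (hv : ∀ y ∈ cube S x, s i y = v) :
    cup s l S x = 0 := by
  induction l generalizing S x with
  | nil => simp at hi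
  | cons a l ih =>
    obtain rfl | hil := List.mem_cons.1 hi
    · calc cup s (i :: l) S x = v * coboundary (cup s l) S x := by
            rw [cup_cons_apply, coboundary, Finset.mul_sum]
            refine Finset.sum_congr rfl fun k hk => ?_
            rw [hv x (self_mem_cube S x),
              hv _ (cube_erase_add_single_subset hk x (self_mem_cube _ _)), mul_add]
        _ = 0 := by rw [coboundary_cup, Pi.zero_apply, Pi.zero_apply, mul_zero]
    · rw [cup_cons_apply]
      refine Finset.sum_eq_zero fun k hk => ?_
      rw [ih hil fun y hy => hv y (cube_erase_add_single_subset hk x hy),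
        ih hil fun y hy => hv y (cube_mono (S.erase_subset k) x hy), mul_zero, mul_zero, add_zero]

end CharTwo

section Stokes

variable [Fintype ι]

theorem apply_eq_of_mem_grid {N : ι → ℕ} {S : Finset ι} {x : ι → ℕ} {i : ι} (hx : x ∈ grid N S)
    (hi : i ∉ S) : x i = N i := by
  simpa [hi] using Fintype.mem_piFinset.1 hx i

theorem sum_grid_eq_sum_grid_erase {M : Type*} [AddCommMonoid M] (N : ι → ℕ) {S : Finset ι} {i : ι}
    (hi : i ∈ S) (g : (ι → ℕ) → M) :
    ∑ x ∈ grid N S, g x =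
      ∑ y ∈ grid N (S.erase i), ∑ t ∈ Finset.range (N i), g (Function.update y i t) := by
  rw [← Finset.sum_product']
  refine Finset.sum_bij' (fun x _ => (Function.update x i (N i), x i))
    (fun q _ => Function.update q.1 i q.2) ?_ ?_ ?_ ?_ ?_
  · intro x hx
    simp only [grid, Fintype.mem_piFinset, Finset.mem_product] at hx ⊢
    refine ⟨fun j => ?_, by simpa [hi] using hx i⟩
    obtain rfl | hj := eq_or_ne j i
    · simp
    · simpa [hj] using hx j
  · rintro ⟨y, t⟩ hy
    simp only [grid, Fintype.mem_piFinset, Finset.mem_product] at hy ⊢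
    intro j
    obtain rfl | hj := eq_or_ne j i
    · simpa [hi] using hy.2
    · simpa [hj] using hy.1 j
  · intro x _
    simp
  · rintro ⟨y, t⟩ hy
    have hyi : y i = N i :=
      apply_eq_of_mem_grid (Finset.mem_product.1 hy).1 (S.notMem_erase i)
    simp [← hyi]
  · intro x _
    simp

theorem sum_grid_add_single [Ring R] [CharP R 2] (N : ι → ℕ) {S : Finset ι} {i : ι} (hi : i ∈ S)
    (g : (ι → ℕ) → R) :
    ∑ x ∈ grid N S, (g (x + Pi.single i 1) + g x) =
      ∑ y ∈ grid N (S.erase i), (g y + g (Function.update y i 0)) := by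
  rw [sum_grid_eq_sum_grid_erase N hi]
  refine Finset.sum_congr rfl fun y hy => ?_
  have hstep : ∀ t, Function.update y i t + Pi.single i 1 = Function.update y i (t + 1) := by
    intro t
    ext j
    obtain rfl | hj := eq_or_ne j i <;> simp [*]
  simp only [hstep, ← CharTwo.sub_eq_add]
  rw [Finset.sum_range_sub fun t => g (Function.update y i t),
    ← apply_eq_of_mem_grid hy (S.notMem_erase i), Function.update_eq_self]

theorem sum_grid_coboundary [Ring R] [CharP R 2] (N : ι → ℕ) (S : Finset ι)
    (w : Finset ι → (ι → ℕ) → R) :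
    ∑ x ∈ grid N S, coboundary w S x =
      ∑ i ∈ S, ∑ y ∈ grid N (S.erase i),
        (w (S.erase i) y + w (S.erase i) (Function.update y i 0)) := by
  simp only [coboundary]
  rw [Finset.sum_comm]
  exact Finset.sum_congr rfl fun i hi => sum_grid_add_single N hi (w (S.erase i))

theorem sum_grid_cup_eq_one [Ring R] [CharP R 2] {s : ι → (ι → ℕ) → R} {N : ι → ℕ}
    (hzero : ∀ i x, x i = 0 → s i x = 0) (hone : ∀ i x, x i = N i → s i x = 1)
    {l : List ι} (hl : l.Nodup) :
    ∑ x ∈ grid N l.toFinset, cup s l l.toFinset x = 1 := by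
  induction l with
  | nil => simp [grid, cup]
  | cons a l ih =>
    obtain ⟨hal, hl⟩ := List.nodup_cons.1 hl
    have herase : (a :: l).toFinset.erase a = l.toFinset := by simp [hal]
    rw [cup, sum_grid_coboundary, Finset.sum_eq_single_of_mem a (by simp), herase]
    · rw [← ih hl]
      refine Finset.sum_congr rfl fun y hy => ?_
      rw [hone a y (apply_eq_of_mem_grid hy (by simpa using hal)),
        hzero a _ (Function.update_self a 0 y), one_mul, zero_mul, add_zero]
    · intro i hi hia
      have hil : i ∈ l := by simpa [hia] using hi
      refine Finset.sum_eq_zero fun y hy => ?_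
      have hnot : i ∉ (a :: l).toFinset.erase i := Finset.notMem_erase i _
      have hupper : cup s l ((a :: l).toFinset.erase i) y = 0 :=
        cup_eq_zero_of_const hil fun z hz =>
          hone i z ((apply_eq_of_mem_cube hz hnot).trans (apply_eq_of_mem_grid hy hnot))
      have hlower : cup s l ((a :: l).toFinset.erase i) (Function.update y i 0) = 0 :=
        cup_eq_zero_of_const hil fun z hz =>
          hzero i z ((apply_eq_of_mem_cube hz hnot).trans (Function.update_self i 0 y))
      rw [hupper, hlower, mul_zero, mul_zero, add_zero]

end Stokes

end Cochains

theorem exists_forall_exists_mem_and_exists_notMem {ι : Type*} [Finite ι]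
    {L : ι → Set (ι → ℕ)} {N : ι → ℕ}
    (hlower : ∀ i x, x i = 0 → x ∉ L i) (hupper : ∀ i x, x i = N i → x ∈ L i) :
    ∃ x : ι → ℕ, (∀ i, x i < N i) ∧
      ∀ i, (∃ y ∈ Set.Icc x (x + 1), y ∈ L i) ∧ ∃ y ∈ Set.Icc x (x + 1), y ∉ L i := by
  classical
  have := Fintype.ofFinite ι
  let s : ι → (ι → ℕ) → ZMod 2 := fun i => (L i).indicator 1
  have hsum := sum_grid_cup_eq_one (s := s) (N := N)
    (fun i x hx => Set.indicator_of_notMem (hlower i x hx) 1)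
    (fun i x hx => Set.indicator_of_mem (hupper i x hx) 1) (Finset.univ.nodup_toList)
  rw [Finset.toList_toFinset] at hsum
  obtain ⟨x, hx, hne⟩ := Finset.exists_ne_zero_of_sum_ne_zero (hsum.trans_ne one_ne_zero)
  have hnonconst : ∀ i v, ∃ y ∈ Set.Icc x (x + 1), s i y ≠ v := fun i v => by
    by_contra! hv
    refine hne (cup_eq_zero_of_const (Finset.mem_toList.2 (Finset.mem_univ i)) (v := v) ?_)
    simpa only [cube, Finset.piecewise_univ] using hv
  refine ⟨x, fun j => by simpa using Fintype.mem_piFinset.1 hx j, fun i => ⟨?_, ?_⟩⟩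
  · obtain ⟨y, hy, hsy⟩ := hnonconst i 0
    exact ⟨y, hy, Set.mem_of_indicator_ne_zero hsy⟩
  · obtain ⟨y, hy, hsy⟩ := hnonconst i 1
    exact ⟨y, hy, fun hL => hsy (Set.indicator_of_mem hL 1)⟩

end CubicalSperner

section GridApproximation

variable {ι : Type*}

/-- The point with index `y` of the grid that divides each edge of the box `[a, b]` into `N` equal
parts. -/
noncomputable def gridPoint (a b : ι → ℝ) (N : ℕ) (y : ι → ℕ) : ι → ℝ :=
  fun i => AffineMap.lineMap (a i) (b i) (y i / N : ℝ)

variable {a b : ι → ℝ} {N : ℕ} {x y : ι → ℕ}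

theorem gridPoint_mem_Icc (hab : a ≤ b) (hy : ∀ i, y i ≤ N) : gridPoint a b N y ∈ Set.Icc a b := by
  have hmem : ∀ i, gridPoint a b N y i ∈ Set.Icc (a i) (b i) := fun i => by
    have hyi : (y i : ℝ) ≤ N := mod_cast hy i
    exact (convex_Icc (a i) (b i)).lineMap_mem (Set.left_mem_Icc.2 (hab i))
      (Set.right_mem_Icc.2 (hab i)) ⟨by positivity, div_le_one_of_le₀ hyi (by positivity)⟩
  exact ⟨fun i => (hmem i).1, fun i => (hmem i).2⟩

theorem gridPoint_apply_of_eq_zero {i : ι} (hy : y i = 0) : gridPoint a b N y i = a i := by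
  simp [gridPoint, hy]

theorem gridPoint_apply_of_eq {i : ι} (hN : N ≠ 0) (hy : y i = N) : gridPoint a b N y i = b i := by
  simp [gridPoint, hy, hN]

theorem dist_gridPoint_le [Fintype ι] (hy : y ∈ Set.Icc x (x + 1)) :
    dist (gridPoint a b N x) (gridPoint a b N y) ≤ dist a b / N := by
  refine (dist_pi_le_iff (by positivity)).2 fun i => ?_
  have hxy : |(x i : ℝ) - y i| ≤ 1 := by
    have h1 : (x i : ℝ) ≤ y i := mod_cast hy.1 i
    have h2 : (y i : ℝ) ≤ x i + 1 := mod_cast hy.2 i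
    rw [abs_le]
    constructor <;> linarith
  calc dist (gridPoint a b N x i) (gridPoint a b N y i)
      = |(x i : ℝ) - y i| / N * dist (a i) (b i) := by
        rw [gridPoint, gridPoint, dist_lineMap_lineMap, Real.dist_eq, ← sub_div, abs_div,
          Nat.abs_cast]
    _ ≤ 1 / N * dist a b := by gcongr; exact dist_le_pi_dist a b i
    _ = dist a b / N := by ring

variable [Fintype ι] {f : (ι → ℝ) → ι → ℝ}

theorem exists_mem_Icc_dist_le_of_sign_on_faces (hab : a ≤ b)
    (hlower : ∀ x ∈ Set.Icc a b, ∀ i, x i = a i → 0 ≤ f x i)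
    (hupper : ∀ x ∈ Set.Icc a b, ∀ i, x i = b i → f x i ≤ 0) (hN : N ≠ 0) :
    ∃ x ∈ Set.Icc a b, ∀ i,
      (∃ y ∈ Set.Icc a b, dist x y ≤ dist a b / N ∧ f y i ≤ 0) ∧
      ∃ y ∈ Set.Icc a b, dist x y ≤ dist a b / N ∧ 0 ≤ f y i := by
  -- The sign of `f · i` decides, except on the faces, where `f · i` may vanish.
  let L : ι → Set (ι → ℕ) := fun i => {y | y i = N ∨ y i ≠ 0 ∧ f (gridPoint a b N y) i < 0}
  obtain ⟨x, hxN, hx⟩ := CubicalSperner.exists_forall_exists_mem_and_exists_notMem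
    (L := L) (N := fun _ => N)
    (fun i y hy => not_or.2 ⟨fun hyN => hN (hyN.symm.trans hy), fun h => h.1 hy⟩)
    (fun i y hy => Or.inl hy)
  have hmem : ∀ y ∈ Set.Icc x (x + 1), gridPoint a b N y ∈ Set.Icc a b := fun y hy =>
    gridPoint_mem_Icc hab fun i => (hy.2 i).trans (hxN i)
  refine ⟨gridPoint a b N x, hmem x (Set.left_mem_Icc.2 le_self_add), fun i => ⟨?_, ?_⟩⟩
  · obtain ⟨y, hy, hyL⟩ := (hx i).1
    refine ⟨gridPoint a b N y, hmem y hy, dist_gridPoint_le hy, ?_⟩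
    rcases hyL with hyN | ⟨-, hneg⟩
    · exact hupper _ (hmem y hy) i (gridPoint_apply_of_eq hN hyN)
    · exact hneg.le
  · obtain ⟨y, hy, hyL⟩ := (hx i).2
    refine ⟨gridPoint a b N y, hmem y hy, dist_gridPoint_le hy, ?_⟩
    by_cases hy0 : y i = 0
    · exact hlower _ (hmem y hy) i (gridPoint_apply_of_eq_zero hy0)
    · exact not_lt.1 fun hneg => hyL (Or.inr ⟨hy0, hneg⟩)

theorem exists_mem_Icc_norm_le_of_sign_on_faces (hab : a ≤ b) (hf : ContinuousOn f (Set.Icc a b))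
    (hlower : ∀ x ∈ Set.Icc a b, ∀ i, x i = a i → 0 ≤ f x i)
    (hupper : ∀ x ∈ Set.Icc a b, ∀ i, x i = b i → f x i ≤ 0) {ε : ℝ} (hε : 0 < ε) :
    ∃ x ∈ Set.Icc a b, ‖f x‖ ≤ ε := by
  obtain ⟨δ, hδ, hfδ⟩ := Metric.uniformContinuousOn_iff.1
    (isCompact_Icc.uniformContinuousOn_of_continuous hf) ε hε
  obtain ⟨n, hn⟩ := exists_nat_gt (dist a b / δ)
  have hn0 : (0 : ℝ) < n := (by positivity : 0 ≤ dist a b / δ).trans_lt hn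
  have hmesh : dist a b / n < δ := (div_lt_comm₀ hδ hn0).1 hn
  obtain ⟨x, hx, hsign⟩ :=
    exists_mem_Icc_dist_le_of_sign_on_faces hab hlower hupper (Nat.cast_pos.1 hn0).ne'
  have hclose : ∀ y ∈ Set.Icc a b, dist x y ≤ dist a b / n → ∀ i, |f x i - f y i| ≤ ε :=
    fun y hy hxy i =>
      (dist_le_pi_dist (f x) (f y) i).trans (hfδ x hx y hy (hxy.trans_lt hmesh)).le
  refine ⟨x, hx, (pi_norm_le_iff_of_nonneg hε.le).2 fun i => abs_le.2 ⟨?_, ?_⟩⟩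
  · obtain ⟨y, hy, hxy, hnonneg⟩ := (hsign i).2
    linarith [(abs_le.1 (hclose y hy hxy i)).1]
  · obtain ⟨y, hy, hxy, hnonpos⟩ := (hsign i).1
    linarith [(abs_le.1 (hclose y hy hxy i)).2]

end GridApproximation

theorem poincare_miranda {ι : Type*} [Finite ι] {a b : ι → ℝ} (hab : a ≤ b)
    {f : (ι → ℝ) → ι → ℝ} (hf : ContinuousOn f (Set.Icc a b))
    (hlower : ∀ x ∈ Set.Icc a b, ∀ i, x i = a i → 0 ≤ f x i)
    (hupper : ∀ x ∈ Set.Icc a b, ∀ i, x i = b i → f x i ≤ 0) :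
    ∃ x ∈ Set.Icc a b, f x = 0 := by
  have := Fintype.ofFinite ι
  obtain ⟨x, hx, hmin⟩ := isCompact_Icc.exists_isMinOn (Set.nonempty_Icc.2 hab) hf.norm
  refine ⟨x, hx, norm_le_zero_iff.1 (le_of_forall_pos_le_add fun ε hε => ?_)⟩
  obtain ⟨y, hy, hfy⟩ := exists_mem_Icc_norm_le_of_sign_on_faces hab hf hlower hupper hε
  exact (hmin hy).trans (hfy.trans_eq (zero_add ε).symm)

theorem mulVec_apply_le_of_apply_eq {ι 𝕜 : Type*} [Fintype ι] [DecidableEq ι] [Ring 𝕜]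
    [LinearOrder 𝕜] [IsOrderedRing 𝕜] (M : Matrix ι ι 𝕜) {x : ι → 𝕜} {r : 𝕜}
    (hx : ∀ j, |x j| ≤ r) {i : ι} (hxi : x i = r) :
    (M *ᵥ x) i ≤ (M i i + ∑ j ∈ Finset.univ.erase i, |M i j|) * r := by
  calc (M *ᵥ x) i = M i i * x i + ∑ j ∈ Finset.univ.erase i, M i j * x j :=
        (Finset.add_sum_erase _ (fun j => M i j * x j) (Finset.mem_univ i)).symm
    _ ≤ M i i * r + ∑ j ∈ Finset.univ.erase i, |M i j| * r := by
        rw [hxi]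
        refine add_le_add_right (Finset.sum_le_sum fun j _ => ?_) _
        calc M i j * x j ≤ |M i j| * |x j| := (le_abs_self _).trans_eq (abs_mul _ _)
          _ ≤ |M i j| * r := by gcongr; exact hx j
    _ = (M i i + ∑ j ∈ Finset.univ.erase i, |M i j|) * r := by rw [add_mul, Finset.sum_mul]

theorem stmt1_general {ι : Type*} [Fintype ι] [DecidableEq ι] (A : (ι → ℝ) → Matrix ι ι ℝ)
    (b h : (ι → ℝ) → ι → ℝ) (hdef : ∀ x, h x = A x *ᵥ x + b x) (hcont : Continuous h)
    (c : ℝ) (hc : c < 0)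
    (hS : ∀ x i, A x i i + ∑ j ∈ Finset.univ.erase i, |A x i j| ≤ c)
    (B : ℝ) (hB : ∀ x, ‖b x‖ ≤ B) :
    ∃ x : ι → ℝ, ‖x‖ ≤ B / |c| ∧ h x = 0 := by
  set r := B / |c| with hr
  have hr0 : 0 ≤ r := div_nonneg ((norm_nonneg _).trans (hB 0)) (abs_nonneg c)
  have hcr : c * r = -B := by
    rw [hr, abs_of_neg hc]
    field_simp [hc.ne]
  have hb : ∀ x i, |b x i| ≤ B := fun x i => (norm_le_pi_norm (b x) i).trans (hB x)
  have hface : ∀ x y i, (∀ j, |y j| ≤ r) → y i = r → (A x *ᵥ y) i ≤ -B := fun x y i hy hyi =>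
    (mulVec_apply_le_of_apply_eq (A x) hy hyi).trans
      ((mul_le_mul_of_nonneg_right (hS x i) hr0).trans_eq hcr)
  have habs : ∀ x ∈ Set.Icc (fun _ : ι => -r) (fun _ => r), ∀ j, |x j| ≤ r :=
    fun x hx j => abs_le.2 ⟨hx.1 j, hx.2 j⟩
  obtain ⟨x, hx, hzero⟩ := poincare_miranda (fun _ => neg_le_self hr0) hcont.continuousOn
    (fun x hx i hxi => by
      have hAx := hface x (-x) i (by simpa using habs x hx) (by simp [hxi])
      rw [mulVec_neg, Pi.neg_apply] at hAx
      rw [hdef, Pi.add_apply]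
      linarith [(abs_le.1 (hb x i)).1])
    (fun x hx i hxi => by
      rw [hdef, Pi.add_apply]
      linarith [hface x x i (habs x hx) hxi, (abs_le.1 (hb x i)).2])
  exact ⟨x, (pi_norm_le_iff_of_nonneg hr0).2 (habs x hx), hzero⟩

/-- If `h x = A_x x + b_x` is continuous, the row sums
`A_x i i + ∑_{j ≠ i} |A_x i j|` are uniformly bounded above by a negative constant,
and `‖A_x‖_∞`, `‖b_x‖_∞` are uniformly bounded, then `h` has a zero. -/
theorem stmt1 {p : ℕ} (A : (Fin p → ℝ) → Matrix (Fin p) (Fin p) ℝ)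
    (b : (Fin p → ℝ) → Fin p → ℝ) (h : (Fin p → ℝ) → Fin p → ℝ)
    (hdef : ∀ x, h x = A x *ᵥ x + b x) (hcont : Continuous h)
    (c : ℝ) (hc : c < 0)
    (hS : ∀ x i, A x i i + ∑ j ∈ Finset.univ.erase i, |A x i j| ≤ c)
    (KA : ℝ) (hKA : ∀ x, ‖A x‖ ≤ KA)
    (B : ℝ) (hB : ∀ x, ‖b x‖ ≤ B) :
    ∃ x : Fin p → ℝ, h x = 0 := by
  obtain ⟨x, -, hx⟩ := stmt1_general A b h hdef hcont c hc hS B hB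
  exact ⟨x, hx⟩
end

section
/- Let G : ℝ^p → ℝ^p be continuous and suppose there exists c* < 1 such that for all x, G(x) = M_x x + v_x with ‖M_x‖_∞ ≤ c* and ‖v_x‖_∞ ≤ B < ∞. Then G has a fixed point, i.e., there exists x* with G(x*) = x*. -/
open Matrix
attribute [local instance] Matrix.linftyOpNormedAddCommGroup

/-
The core is Brouwer's theorem, proved by the analytic method of Milnor and Rogers. If `g` is
Lipschitz and vanishes off an open set `s`, then for small `t` the map `id + t • g` is a bijection
of `s`, so the integral over `s` of its Jacobian `det (1 + t • g')` is the volume of `s`. The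
integrand is a polynomial in `t`, hence so is the integral, and it equals the volume for every `t`.
Take `t = 1` and let `g` extend `f - id` by zero, where `f` is a `C¹` map which is the identity on
the boundary of `s`: if `f` had constant nonzero norm on `s`, its Jacobian, and hence the volume,
would vanish. Normalizing `x - k x` would give such an `f` for a compactly supported `k` without
fixed points. If the solutions of `x = c • G x` with `0 ≤ c ≤ 1` are bounded a priori, a fixed point
of the product of `G` with a cutoff function is one of `G`.
-/

open Function Metric MeasureTheory Set Filter Topology
open scoped NNReal

section PolynomialFamilies

open Polynomial

theorem integral_eval_eq_of_infinite {α 𝕜 : Type*} [RCLike 𝕜] [MeasurableSpace α] {μ : Measure α}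
    {q : α → 𝕜[X]} {n : ℕ} (hq : ∀ x, (q x).natDegree ≤ n) {T : Set 𝕜} (hT : T.Infinite) {c : 𝕜}
    (hint : ∀ t ∈ T, Integrable (fun x ↦ (q x).eval t) μ)
    (hc : ∀ t ∈ T, ∫ x, (q x).eval t ∂μ = c) (t : 𝕜) : ∫ x, (q x).eval t ∂μ = c := by
  obtain ⟨N, hNT, hN⟩ := hT.exists_subset_card_eq (n + 1)
  have hinj : InjOn id (N : Set 𝕜) := injOn_id _
  have hlagrange (x : α) :
      (q x).eval t = ∑ a ∈ N, (q x).eval a * (Lagrange.basis N id a).eval t := by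
    have hdeg : (q x).degree < N.card := by
      rw [hN]
      exact degree_le_of_natDegree_le (hq x) |>.trans_lt (by exact_mod_cast n.lt_succ_self)
    conv_lhs => rw [Lagrange.eq_interpolate hinj hdeg]
    simp [Lagrange.interpolate_apply, eval_finsetSum]
  have hbasis : ∑ a ∈ N, (Lagrange.basis N id a).eval t = 1 := by
    rw [← eval_finsetSum, Lagrange.sum_basis hinj (Finset.card_pos.1 (by omega)), eval_one]
  calc ∫ x, (q x).eval t ∂μ
      = ∑ a ∈ N, (∫ x, (q x).eval a ∂μ) * (Lagrange.basis N id a).eval t := by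
        simp_rw [hlagrange]
        rw [integral_finsetSum _ fun a ha ↦ (hint a (hNT ha)).mul_const _]
        simp_rw [integral_mul_const]
    _ = ∑ a ∈ N, c * (Lagrange.basis N id a).eval t :=
        Finset.sum_congr rfl fun a ha ↦ by rw [hc a (hNT ha)]
    _ = c := by rw [← Finset.mul_sum, hbasis, mul_one]

theorem eval_det_X_smul_map_C_add_map_C {n R : Type*} [Fintype n] [DecidableEq n] [CommRing R]
    (A B : Matrix n n R) (t : R) :
    ((X : R[X]) • A.map C + B.map C).det.eval t = (t • A + B).det := by
  simp [eval_det, ← smul_eq_mul_diagonal, add_comm]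

theorem exists_polynomial_eval_eq_det_one_add_smul {R M : Type*} [CommRing R] [Nontrivial R]
    [AddCommGroup M] [Module R M] [Module.Free R M] [Module.Finite R M] (A : M →ₗ[R] M) :
    ∃ q : R[X], q.natDegree ≤ Module.finrank R M ∧
      ∀ t : R, q.eval t = LinearMap.det (1 + t • A) := by
  let b := Module.finBasis R M
  refine ⟨_, (natDegree_det_X_add_C_le (LinearMap.toMatrix b b A) 1).trans_eq (Fintype.card_fin _),
    fun t ↦ ?_⟩
  rw [eval_det_X_smul_map_C_add_map_C, ← LinearMap.det_toMatrix b, map_add, map_smul,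
    LinearMap.toMatrix_one, add_comm]

end PolynomialFamilies

theorem image_eq_of_bijective_of_eqOn_compl {α : Type*} {f : α → α} {s : Set α}
    (hf : Bijective f) (h : EqOn f id sᶜ) : f '' s = s := by
  rw [← compl_inj_iff, ← image_compl_eq hf, h.image_eq, image_id]

section Jacobian

variable {E : Type*} [NormedAddCommGroup E] [NormedSpace ℝ E]

theorem bijective_id_add_of_lipschitzWith [CompleteSpace E] {g : E → E} {K : ℝ≥0}
    (hg : LipschitzWith K g) (hK : K < 1) : Bijective fun x ↦ x + g x := by
  have happrox : ApproximatesLinearOn (fun x ↦ x + g x)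
      (ContinuousLinearEquiv.refl ℝ E : E →L[ℝ] E) univ K := fun x _ y _ ↦ by
    simpa [add_sub_add_comm] using hg.norm_sub_le x y
  have hsmall : Subsingleton E ∨
      K < ‖((ContinuousLinearEquiv.refl ℝ E).symm : E →L[ℝ] E)‖₊⁻¹ := by
    rcases subsingleton_or_nontrivial E with h | h
    · exact .inl h
    · right
      simpa using hK
  exact ⟨injOn_univ.1 (happrox.injOn hsmall), happrox.surjective hsmall⟩

theorem det_one_add_pos_of_norm_lt_one [CompleteSpace E] {A : E →L[ℝ] E} (hA : ‖A‖ < 1) :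
    0 < (1 + A).det := by
  have hne : ∀ B ∈ ball (0 : E →L[ℝ] E) 1, (1 + B).det ≠ 0 := fun B hB ↦ by
    have hunit : IsUnit (1 + B) := by
      simpa using isUnit_one_sub_of_norm_lt_one (x := -B) (by simpa using hB)
    exact ((hunit.map ContinuousLinearMap.toLinearMapRingHom).map LinearMap.det).ne_zero
  have hcont : Continuous fun B : E →L[ℝ] E ↦ (1 + B).det :=
    ContinuousLinearMap.continuous_det.comp (continuous_const.add continuous_id)
  by_contra! hle
  obtain ⟨B, hB, hB0⟩ := (convex_ball (0 : E →L[ℝ] E) 1).isPreconnected.intermediate_value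
    (mem_ball_zero_iff.2 hA) (mem_ball_self one_pos) hcont.continuousOn
    ⟨hle, by simp [ContinuousLinearMap.det]⟩
  exact hne B hB hB0

variable [FiniteDimensional ℝ E]

theorem lipschitzWith_indicator_of_eqOn_frontier {F : Type*} [SeminormedAddCommGroup F]
    {f : E → F} {K : ℝ≥0} {s : Set E} (hf : LipschitzOnWith K f (closure s))
    (h0 : EqOn f 0 (frontier s)) : LipschitzWith K (s.indicator f) := by
  have hmixed {x y : E} (hx : x ∈ s) (hy : y ∉ s) : ‖f x‖ ≤ K * dist x y := by
    obtain ⟨z, hz, hxz⟩ := exists_mem_frontier_infDist_compl_eq_dist hx fun h ↦ hy (h ▸ mem_univ y)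
    calc ‖f x‖ = dist (f x) (f z) := by rw [h0 hz, Pi.zero_apply, dist_zero_right]
      _ ≤ K * dist x z := hf.dist_le_mul x (subset_closure hx) z (frontier_subset_closure hz)
      _ ≤ K * dist x y := by
        rw [← hxz]
        gcongr
        exact infDist_le_dist_of_mem hy
  refine LipschitzWith.of_dist_le_mul fun x y ↦ ?_
  by_cases hx : x ∈ s <;> by_cases hy : y ∈ s
  · simpa [hx, hy] using hf.dist_le_mul x (subset_closure hx) y (subset_closure hy)
  · simpa [hx, hy] using hmixed hx hy
  · simpa [hx, hy, dist_comm] using hmixed hy hx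
  · simp only [hx, hy, not_false_eq_true, indicator_of_notMem, dist_self]
    positivity

variable [MeasurableSpace E] [BorelSpace E] (μ : Measure E) [μ.IsAddHaarMeasure]
  {g : E → E} {K : ℝ≥0} {s : Set E}

theorem integrableOn_and_setIntegral_det_one_add_fderiv_of_lt_one (hg : LipschitzWith K g)
    (hK : K < 1) (hs : IsOpen s) (hμs : μ s ≠ ⊤) (hd : ∀ x ∈ s, DifferentiableAt ℝ g x)
    (hsupp : support g ⊆ s) :
    IntegrableOn (fun x ↦ (1 + fderiv ℝ g x).det) s μ ∧
      ∫ x in s, (1 + fderiv ℝ g x).det ∂μ = μ.real s := by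
  have := FiniteDimensional.complete ℝ E
  have hbij := bijective_id_add_of_lipschitzWith hg hK
  have himage : (fun x ↦ x + g x) '' s = s :=
    image_eq_of_bijective_of_eqOn_compl hbij fun x hx ↦ by
      simp [notMem_support.1 (notMem_subset hsupp hx)]
  have hderiv : ∀ x ∈ s, HasFDerivWithinAt (fun x ↦ x + g x) (1 + fderiv ℝ g x) s x := fun x hx ↦
    ((hasFDerivAt_id x).add (hd x hx).hasFDerivAt).hasFDerivWithinAt
  have habs (x : E) : |(1 + fderiv ℝ g x).det| = (1 + fderiv ℝ g x).det :=
    abs_of_pos <| det_one_add_pos_of_norm_lt_one <|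
      (norm_fderiv_le_of_lipschitz ℝ hg).trans_lt (by exact_mod_cast hK)
  have hint := integrableOn_image_iff_integrableOn_abs_det_fderiv_smul μ hs.measurableSet hderiv
    hbij.1.injOn fun _ ↦ (1 : ℝ)
  have heq := integral_image_eq_integral_abs_det_fderiv_smul μ hs.measurableSet hderiv
    hbij.1.injOn fun _ ↦ (1 : ℝ)
  simp only [habs, himage, smul_eq_mul, mul_one] at hint heq
  exact ⟨hint.1 (integrableOn_const hμs), by simp [← heq]⟩

theorem setIntegral_det_one_add_fderiv_of_lipschitzWith (hg : LipschitzWith K g) (hs : IsOpen s)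
    (hμs : μ s ≠ ⊤) (hd : ∀ x ∈ s, DifferentiableAt ℝ g x) (hsupp : support g ⊆ s) :
    ∫ x in s, (1 + fderiv ℝ g x).det ∂μ = μ.real s := by
  choose q hdeg hq using fun x ↦
    exists_polynomial_eval_eq_det_one_add_smul (fderiv ℝ g x : E →ₗ[ℝ] E)
  replace hq (x : E) (t : ℝ) : (q x).eval t = (1 + t • fderiv ℝ g x).det := hq x t
  have hsmall : ∀ t ∈ Ioo (0 : ℝ) (1 / (K + 1)),
      IntegrableOn (fun x ↦ (q x).eval t) s μ ∧ ∫ x in s, (q x).eval t ∂μ = μ.real s := by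
    intro t ht
    have hlt : ‖t‖₊ * K < 1 := by
      rw [← NNReal.coe_lt_coe, NNReal.coe_mul, coe_nnnorm, Real.norm_of_nonneg ht.1.le]
      calc t * K ≤ t * (K + 1) := by gcongr; exacts [ht.1.le, le_add_of_nonneg_right zero_le_one]
        _ < 1 := (lt_div_iff₀ (by positivity)).1 ht.2
    have hscaled := integrableOn_and_setIntegral_det_one_add_fderiv_of_lt_one μ (g := t • g)
      ((lipschitzWith_smul t).comp hg) hlt hs hμs (fun x hx ↦ (hd x hx).const_smul t)
      ((support_const_smul_subset t g).trans hsupp)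
    simpa only [fderiv_const_smul_field, Pi.smul_apply, hq] using hscaled
  have hone := integral_eval_eq_of_infinite hdeg (Ioo_infinite (by positivity))
    (fun t ht ↦ (hsmall t ht).1) (fun t ht ↦ (hsmall t ht).2) 1
  simpa only [hq, one_smul] using hone

theorem setIntegral_det_fderiv_of_eqOn_frontier {f : E → E} (hf : ContDiff ℝ 1 f) (hs : IsOpen s)
    (hb : Bornology.IsBounded s) (hid : EqOn f id (frontier s)) :
    ∫ x in s, (fderiv ℝ f x).det ∂μ = μ.real s := by
  have hfid : ContDiff ℝ 1 (f - id) := hf.sub contDiff_id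
  obtain ⟨K, hK⟩ := hfid.locallyLipschitz.locallyLipschitzOn.exists_lipschitzOnWith_of_compact
    hb.isCompact_closure
  have hlip : LipschitzWith K (s.indicator (f - id)) :=
    lipschitzWith_indicator_of_eqOn_frontier hK fun x hx ↦ by simp [hid hx]
  have hderiv : ∀ x ∈ s, HasFDerivAt (s.indicator (f - id)) (fderiv ℝ f x - 1) x := fun x hx ↦
    ((hf.differentiable one_ne_zero x).hasFDerivAt.sub (hasFDerivAt_id x)).congr_of_eventuallyEq
      (eqOn_indicator.eventuallyEq_of_mem (hs.mem_nhds hx))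
  rw [← setIntegral_det_one_add_fderiv_of_lipschitzWith μ hlip hs hb.measure_lt_top.ne
    (fun x hx ↦ (hderiv x hx).differentiableAt) support_indicator_subset]
  refine setIntegral_congr_fun hs.measurableSet fun x hx ↦ ?_
  simp only [(hderiv x hx).fderiv, add_sub_cancel]

end Jacobian

section NoRetraction

variable {E : Type*} [NormedAddCommGroup E] [InnerProductSpace ℝ E] [FiniteDimensional ℝ E]

theorem det_eq_zero_of_norm_eventuallyEq {f : E → E} {f' : E →L[ℝ] E} {x : E} {r : ℝ}
    (hf : HasFDerivAt f f' x) (hr : r ≠ 0) (hnorm : ∀ᶠ y in 𝓝 x, ‖f y‖ = r) : f'.det = 0 := by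
  by_contra hdet
  obtain ⟨u, hu⟩ : ∃ u, f' u = f x :=
    (LinearMap.equivOfDetNeZero (f' : E →ₗ[ℝ] E) hdet).surjective (f x)
  have hconst : (fun y ↦ ‖f y‖ ^ 2) =ᶠ[𝓝 x] fun _ ↦ r ^ 2 := hnorm.mono fun y hy ↦ by simp only [hy]
  have hzero := (hf.norm_sq.congr_of_eventuallyEq hconst.symm).unique (hasFDerivAt_const _ x)
  have hinner : 2 * ‖f x‖ ^ 2 = 0 := by simpa [hu] using DFunLike.congr_fun hzero u
  simp [hnorm.self_of_nhds, hr] at hinner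

theorem not_eqOn_id_frontier_of_norm_eq {f : E → E} {s : Set E} {r : ℝ} (hf : ContDiff ℝ 1 f)
    (hs : IsOpen s) (hne : s.Nonempty) (hb : Bornology.IsBounded s) (hr : r ≠ 0)
    (hnorm : ∀ x ∈ s, ‖f x‖ = r) : ¬ EqOn f id (frontier s) := by
  intro hid
  borelize E
  let μ : Measure E := Measure.addHaar
  have hdet : ∀ x ∈ s, (fderiv ℝ f x).det = 0 := fun x hx ↦
    det_eq_zero_of_norm_eventuallyEq (hf.differentiable one_ne_zero x).hasFDerivAt hr <|
      eventually_of_mem (hs.mem_nhds hx) hnorm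
  have hvol : μ.real s = 0 := by
    rw [← setIntegral_det_fderiv_of_eqOn_frontier μ hf hs hb hid,
      setIntegral_congr_fun hs.measurableSet hdet, integral_zero]
  exact (ENNReal.toReal_pos (hs.measure_pos μ hne).ne' hb.measure_lt_top.ne).ne' hvol

theorem exists_isFixedPt_of_contDiff_of_hasCompactSupport {g : E → E} (hg : ContDiff ℝ 1 g)
    (hsupp : HasCompactSupport g) : ∃ x, IsFixedPt g x := by
  by_contra! hfix
  have hne (x : E) : x - g x ≠ 0 := sub_ne_zero.2 (Ne.symm (hfix x))
  obtain ⟨R, hR, hgR⟩ := hsupp.isCompact.isBounded.subset_ball_lt 0 0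
  let f : E → E := fun x ↦ R • NormedSpace.normalize (x - g x)
  have hsub : ContDiff ℝ 1 fun x ↦ x - g x := contDiff_id.sub hg
  have hf : ContDiff ℝ 1 f :=
    (((hsub.norm ℝ hne).inv fun x ↦ norm_ne_zero_iff.2 (hne x)).smul hsub).const_smul R
  have hnorm (x : E) : ‖f x‖ = R := by
    rw [norm_smul, NormedSpace.norm_normalize (hne x), mul_one, Real.norm_of_nonneg hR.le]
  refine not_eqOn_id_frontier_of_norm_eq hf isOpen_ball ⟨0, mem_ball_self hR⟩ isBounded_ball hR.ne'
    (fun x _ ↦ hnorm x) fun x hx ↦ ?_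
  rw [frontier_ball 0 hR.ne', mem_sphere_zero_iff_norm] at hx
  have hgx : g x = 0 := image_eq_zero_of_notMem_tsupport fun h ↦ by
    simpa [hx] using hgR h
  simp only [f, hgx, sub_zero, ← hx, NormedSpace.norm_smul_normalize, id]

end NoRetraction

section FixedPoint

variable {E : Type*} [NormedAddCommGroup E] [NormedSpace ℝ E] [FiniteDimensional ℝ E]

theorem exists_isFixedPt_of_hasCompactSupport {k : E → E} (hk : Continuous k)
    (hsupp : HasCompactSupport k) : ∃ x, IsFixedPt k x := by
  by_contra! hfix
  -- The tolerance `‖x - k x‖` keeps the smooth approximation `g` free of fixed points.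
  obtain ⟨g, hg, hgk, hgsupp⟩ := hk.exists_contDiff_approx 1 (continuous_id.sub hk).norm
    fun x ↦ norm_pos_iff.2 (sub_ne_zero.2 (Ne.symm (hfix x)))
  let e : E ≃L[ℝ] _ := toEuclidean
  obtain ⟨y, hy⟩ := exists_isFixedPt_of_contDiff_of_hasCompactSupport (g := e ∘ g ∘ e.symm)
    (e.contDiff.comp (hg.comp e.symm.contDiff))
    (((hsupp.mono hgsupp).comp_homeomorph e.symm.toHomeomorph).comp_left (map_zero e))
  have hgx : g (e.symm y) = e.symm y := e.eq_symm_apply.2 hy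
  have hlt := hgk (e.symm y)
  rw [hgx, dist_eq_norm] at hlt
  exact lt_irrefl _ hlt

/-- The finite-dimensional **Leray–Schauder alternative**. -/
theorem exists_isFixedPt_of_forall_norm_le {G : E → E} (hG : Continuous G) {R : ℝ}
    (hR : ∀ c ∈ Icc (0 : ℝ) 1, ∀ x, IsFixedPt (c • G) x → ‖x‖ ≤ R) : ∃ x, IsFixedPt G x := by
  obtain ⟨c, hcone, -, hcsupp, hc⟩ := exists_continuous_one_zero_of_isCompact
    (isCompact_closedBall (0 : E) R) isClosed_empty (disjoint_empty _)
  obtain ⟨x, hx⟩ := exists_isFixedPt_of_hasCompactSupport (c.continuous.smul hG)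
    (hcsupp.smul_right (f' := G))
  have hcx : c x = 1 := hcone (mem_closedBall_zero_iff.2 (hR (c x) (hc x) x hx))
  exact ⟨x, by simpa [IsFixedPt, hcx] using hx⟩

theorem stmt2_general {G : E → E} (hG : Continuous G) {c B : ℝ} (hc : c < 1)
    (hbound : ∀ x, ‖G x‖ ≤ c * ‖x‖ + B) : ∃ x, G x = x := by
  refine exists_isFixedPt_of_forall_norm_le hG (R := B / (1 - c)) fun a ha x hx ↦ ?_
  have hnorm : ‖x‖ ≤ c * ‖x‖ + B := calc
    ‖x‖ = ‖a • G x‖ := congrArg norm hx.symm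
    _ = a * ‖G x‖ := by rw [norm_smul, Real.norm_of_nonneg ha.1]
    _ ≤ ‖G x‖ := mul_le_of_le_one_left (norm_nonneg _) ha.2
    _ ≤ c * ‖x‖ + B := hbound x
  rw [le_div_iff₀ (by linarith)]
  linarith

end FixedPoint

/-- If `G x = M_x x + v_x` is continuous with `‖M_x‖_∞ ≤ c* < 1` and
`‖v_x‖_∞ ≤ B` uniformly, then `G` has a fixed point. -/
theorem stmt2 {p : ℕ} (G : (Fin p → ℝ) → Fin p → ℝ) (hG : Continuous G)
    (M : (Fin p → ℝ) → Matrix (Fin p) (Fin p) ℝ) (v : (Fin p → ℝ) → Fin p → ℝ)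
    (cstar B : ℝ) (hc : cstar < 1)
    (hGeq : ∀ x, G x = M x *ᵥ x + v x)
    (hM : ∀ x, ‖M x‖ ≤ cstar) (hv : ∀ x, ‖v x‖ ≤ B) :
    ∃ x : Fin p → ℝ, G x = x := by
  exact stmt2_general hG hc fun x ↦ hGeq x ▸ norm_add_le_of_le
    ((linfty_opNorm_mulVec _ _).trans (by gcongr; exact hM x)) (hv x)
end
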